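/- Let S be a measurable space, let G and F be disjoint measurable subsets of S, and let μ be a probability measure on the trajectory space ℕ → S (with the product σ-algebra) such that μ-almost every trajectory s satisfies s 0 ∉ G ∪ F. With τ_G, τ_F, τ and the return R defined pathwise as usual, the expected return equals the reach–avoid success probability: ∫ R dμ = μ{s : τ_G(s) < τ_F(s)}. In particular, the value function defined as the expected undiscounted return equals the probability of reaching G before F. -/

import Mathlib

/-!
A reward collected at a time `t < τ` means that `t + 1` is the first visit to `G`, and that `F` is
not visited up to time `t + 1`, where disjointness of `G` and `F` handles time `t + 1` itself. Since
there is only one first visit, the return of a trajectory starting outside `G` is the indicator of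
`{τ_G < τ_F}`, and it remains to integrate. A trajectory starting in `G` collects nothing.
-/

open scoped ENNReal
open MeasureTheory

/-- The hitting time of the set `A` by the trajectory `s`, with value `∞` (in `ℕ∞`)
if `A` is never visited. -/
noncomputable def hitTime {S : Type*} (A : Set S) (s : ℕ → S) : ℕ∞ :=
  ⨅ t ∈ {t : ℕ | s t ∈ A}, (t : ℕ∞)

/-- The undiscounted return: the sum over all times `t` before the first-exit time
`τ = min (hitTime G s) (hitTime F s)` of the sparse entrance reward `1{s (t+1) ∈ G}`,
interpreted as a possibly infinite sum of indicators when `τ = ∞`. -/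
noncomputable def reachAvoidReturn {S : Type*} (G F : Set S) (s : ℕ → S) : ℝ≥0∞ :=
  ∑' t : ℕ,
    Set.indicator {t : ℕ | (t : ℕ∞) < min (hitTime G s) (hitTime F s) ∧ s (t + 1) ∈ G}
      (fun _ => (1 : ℝ≥0∞)) t

section HitTime

variable {S : Type*} {A : Set S} {s : ℕ → S}

lemma natCast_le_hitTime_iff {n : ℕ} : (n : ℕ∞) ≤ hitTime A s ↔ ∀ k < n, s k ∉ A := by
  simp only [hitTime, le_iInf_iff, Set.mem_ofPred_eq, Nat.cast_le]
  exact forall_congr' fun k => by rw [← not_imp_not, not_le]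

lemma natCast_lt_hitTime_iff {n : ℕ} : (n : ℕ∞) < hitTime A s ↔ ∀ k ≤ n, s k ∉ A := by
  simpa only [Nat.cast_add_one, ENat.natCast_add_one_le_iff, Nat.lt_succ_iff] using
    natCast_le_hitTime_iff (A := A) (s := s) (n := n + 1)

lemma hitTime_eq_natCast_iff {n : ℕ} : hitTime A s = n ↔ s n ∈ A ∧ ∀ k < n, s k ∉ A := by
  rw [le_antisymm_iff, ← not_lt, natCast_lt_hitTime_iff, natCast_le_hitTime_iff]
  simp only [← Nat.lt_succ_iff, Nat.forall_lt_succ_right]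
  tauto

lemma hitTime_eq_zero_iff : hitTime A s = 0 ↔ s 0 ∈ A := by
  simpa using hitTime_eq_natCast_iff (A := A) (s := s) (n := 0)

lemma exists_hitTime_eq_natCast_succ (h0 : s 0 ∉ A) (htop : hitTime A s ≠ ⊤) :
    ∃ m : ℕ, hitTime A s = (m + 1 : ℕ) := by
  obtain ⟨n, hn⟩ := ENat.ne_top_iff_exists.1 htop
  cases n with
  | zero => exact absurd (hitTime_eq_zero_iff.1 hn.symm) h0
  | succ m => exact ⟨m, hn.symm⟩

lemma measurable_hitTime [MeasurableSpace S] (hA : MeasurableSet A) :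
    Measurable (hitTime A) := by
  refine ENat.measurable_iff.2 fun n => ?_
  simp only [Set.preimage, Set.mem_singleton_iff, hitTime_eq_natCast_iff]
  measurability

end HitTime

section Return

variable {S : Type*} {G F : Set S}

lemma lt_min_hitTime_and_mem_iff (hGF : Disjoint G F) {s : ℕ → S} {t : ℕ} :
    (t : ℕ∞) < min (hitTime G s) (hitTime F s) ∧ s (t + 1) ∈ G ↔
      hitTime G s = (t + 1 : ℕ) ∧ hitTime G s < hitTime F s := by
  rw [lt_min_iff]
  constructor
  · rintro ⟨⟨htG, htF⟩, hmem⟩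
    have hfirst : hitTime G s = (t + 1 : ℕ) := hitTime_eq_natCast_iff.2
      ⟨hmem, fun k hk => natCast_lt_hitTime_iff.1 htG k (Nat.lt_succ_iff.1 hk)⟩
    refine ⟨hfirst, hfirst ▸ natCast_lt_hitTime_iff.2 fun k hk => ?_⟩
    rcases Nat.le_succ_iff.1 hk with hk | rfl
    · exact natCast_lt_hitTime_iff.1 htF k hk
    · exact hGF.notMem_of_mem_left hmem
  · rintro ⟨hfirst, hlt⟩
    have htG : (t : ℕ∞) < hitTime G s := hfirst ▸ Nat.cast_lt.2 t.lt_succ_self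
    exact ⟨⟨htG, htG.trans hlt⟩, (hitTime_eq_natCast_iff.1 hfirst).1⟩

lemma reachAvoidReturn_eq_encard (hGF : Disjoint G F) (s : ℕ → S) :
    reachAvoidReturn G F s =
      {t : ℕ | hitTime G s = (t + 1 : ℕ) ∧ hitTime G s < hitTime F s}.encard := by
  simp only [reachAvoidReturn, lt_min_hitTime_and_mem_iff hGF]
  rw [← tsum_subtype, ENNReal.tsum_set_one]

lemma reachAvoidReturn_eq_indicator (hGF : Disjoint G F) :
    reachAvoidReturn G F =
      Set.indicator {s : ℕ → S | s 0 ∉ G ∧ hitTime G s < hitTime F s} 1 := by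
  ext s
  rw [reachAvoidReturn_eq_encard hGF]
  by_cases h : s 0 ∉ G ∧ hitTime G s < hitTime F s
  · obtain ⟨m, hm⟩ := exists_hitTime_eq_natCast_succ h.1 h.2.ne_top
    have htimes : {t : ℕ | hitTime G s = (t + 1 : ℕ) ∧ hitTime G s < hitTime F s} = {m} := by
      ext t
      rw [Set.mem_ofPred_eq, and_iff_left h.2, hm, Nat.cast_inj, Nat.succ_inj, eq_comm,
        Set.mem_singleton_iff]
    rw [htimes, Set.encard_singleton, Set.indicator_of_mem (by exact h), Pi.one_apply,
      ENat.toENNReal_one]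
  · have htimes : {t : ℕ | hitTime G s = (t + 1 : ℕ) ∧ hitTime G s < hitTime F s} = ∅ := by
      refine Set.eq_empty_of_forall_notMem fun t ht => h ⟨fun h0 => ?_, ht.2⟩
      exact (hitTime_eq_natCast_iff.1 ht.1).2 0 t.succ_pos h0
    rw [htimes, Set.encard_empty, Set.indicator_of_notMem (by exact h), ENat.toENNReal_zero]

variable [MeasurableSpace S]

lemma measurableSet_hitTime_lt_hitTime (hG : MeasurableSet G) (hF : MeasurableSet F) :
    MeasurableSet {s : ℕ → S | hitTime G s < hitTime F s} :=
  (measurable_hitTime hG).prodMk (measurable_hitTime hF)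
    (.of_discrete : MeasurableSet {p : ℕ∞ × ℕ∞ | p.1 < p.2})

theorem expected_return_eq_reachAvoid_prob_general (hG : MeasurableSet G) (hF : MeasurableSet F)
    (hGF : Disjoint G F) (μ : Measure (ℕ → S)) :
    ∫⁻ s, reachAvoidReturn G F s ∂μ = μ {s | s 0 ∉ G ∧ hitTime G s < hitTime F s} := by
  rw [reachAvoidReturn_eq_indicator hGF]
  have hstart : MeasurableSet {s : ℕ → S | s 0 ∉ G} := (measurable_pi_apply 0 hG).compl
  exact lintegral_indicator_one (hstart.inter (measurableSet_hitTime_lt_hitTime hG hF))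

end Return

/-- For any probability measure `μ` on trajectory space (with the product σ-algebra)
under which almost every trajectory starts outside `G ∪ F`, the expected undiscounted
return equals the reach–avoid success probability `μ {s | τ_G(s) < τ_F(s)}`. -/
theorem expected_return_eq_reachAvoid_prob {S : Type*} [MeasurableSpace S]
    (G F : Set S) (hG : MeasurableSet G) (hF : MeasurableSet F) (hGF : Disjoint G F)
    (μ : Measure (ℕ → S)) [IsProbabilityMeasure μ]
    (h0 : ∀ᵐ s ∂μ, s 0 ∉ G ∪ F) :
    ∫⁻ s, reachAvoidReturn G F s ∂μ = μ {s : ℕ → S | hitTime G s < hitTime F s} := by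
  rw [expected_return_eq_reachAvoid_prob_general hG hF hGF μ]
  exact measure_congr <| h0.mono fun s hs => propext <| and_iff_right fun hsG => hs (.inl hsG)
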